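/- Fix integers d ≥ 3 and 2 ≤ j ≤ d−1. Let P(d,j) ⊂ ℝ^d be the convex hull of 0, e₁,…,e_{d−1}, and e₁+⋯+e_j + j·e_d. Then the δ-vector of P(d,j) is (1,0,1,1,…,1,0,…,0) with j−1 ones in positions 2 through j; in particular the normalized volume of P(d,j) is j, δ₁ = 0 (so P(d,j) is an empty simplex), and μ_Ehr(P(d,j)) = j. -/

import Mathlib

open scoped BigOperators Pointwise

/-- Points of `ℝ^N`. -/
abbrev Pt (N : ℕ) := Fin N → ℝ

/-- A point has integer coordinates. -/
def IsLat {N : ℕ} (x : Pt N) : Prop := ∀ i, ∃ z : ℤ, x i = (z : ℝ)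

/-- Lattice points of a set. -/
def latPts {N : ℕ} (P : Set (Pt N)) : Set (Pt N) := {x ∈ P | IsLat x}

/-- The dilated polytope `kP`. -/
def dil {N : ℕ} (k : ℕ) (P : Set (Pt N)) : Set (Pt N) := (k : ℝ) • P

/-- `α` is a sum of `k` lattice points of `P`. -/
def DecomposesIn {N : ℕ} (P : Set (Pt N)) (k : ℕ) (α : Pt N) : Prop :=
  ∃ f : Fin k → Pt N, (∀ i, f i ∈ latPts P) ∧ α = ∑ i, f i

/-- The integer decomposition property. -/
def HasIDP {N : ℕ} (P : Set (Pt N)) : Prop :=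
  ∀ k : ℕ, 0 < k → ∀ α ∈ latPts (dil k P), DecomposesIn P k α

/-- Very ampleness: decomposition holds for all sufficiently large `k`. -/
def VeryAmple {N : ℕ} (P : Set (Pt N)) : Prop :=
  ∃ k₀ : ℕ, ∀ k, k₀ ≤ k → ∀ α ∈ latPts (dil k P), DecomposesIn P k α

/-- An integral convex polytope: the convex hull of finitely many lattice points
(which include all its vertices). -/
def IsIntegralPolytope {N : ℕ} (P : Set (Pt N)) : Prop :=
  ∃ V : Finset (Pt N), (∀ v ∈ V, IsLat v) ∧ P = convexHull ℝ (V : Set (Pt N))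

/-- Dimension of a polytope: the rank of the direction of its affine span. -/
noncomputable def polyDim {N : ℕ} (P : Set (Pt N)) : ℕ :=
  Module.finrank ℝ (affineSpan ℝ P).direction

/-- Lattice points of the cone `C(P) ⊂ ℝ^{N+1}` generated by `P̃ = P × {1}`;
a point of `ℝ^{N+1}` is represented as a pair `(x, deg)`. -/
def coneLat {N : ℕ} (P : Set (Pt N)) : Set (Pt N × ℝ) :=
  {p | (∃ (m : ℕ) (c : Fin m → ℝ) (w : Fin m → Pt N),
        (∀ i, 0 ≤ c i ∧ w i ∈ P) ∧ p.1 = ∑ i, c i • w i ∧ p.2 = ∑ i, c i)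
    ∧ IsLat p.1 ∧ ∃ z : ℤ, p.2 = (z : ℝ)}

/-- The monoid `ℤ_{≥0}(P̃ ∩ ℤ^{N+1})` generated by the degree-one lattice points of the cone. -/
def genMonoid {N : ℕ} (P : Set (Pt N)) : Set (Pt N × ℝ) :=
  {p | ∃ (m : ℕ) (f : Fin m → Pt N), (∀ i, f i ∈ latPts P) ∧
        p.1 = ∑ i, f i ∧ p.2 = (m : ℝ)}

/-- `H` is the minimal Hilbert basis of the cone `C(P)`. -/
def IsMinHilbertBasis {N : ℕ} (P : Set (Pt N)) (H : Set (Pt N × ℝ)) : Prop :=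
  (H.Finite ∧ H ⊆ coneLat P ∧
      coneLat P ⊆ (AddSubmonoid.closure H : Set (Pt N × ℝ))) ∧
  ∀ H' : Set (Pt N × ℝ),
    (H'.Finite ∧ H' ⊆ coneLat P ∧
      coneLat P ⊆ (AddSubmonoid.closure H' : Set (Pt N × ℝ))) → H ⊆ H'

/-- `v` lists the vertices of an empty `d`-simplex contained in `P`. -/
def EmptySimplexIn {N : ℕ} (P : Set (Pt N)) (d : ℕ) (v : Fin (d+1) → Pt N) : Prop :=
  (∀ i, v i ∈ latPts P) ∧ AffineIndependent ℝ v ∧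
    ∀ x ∈ convexHull ℝ (Set.range v), IsLat x → x ∈ Set.range v

/-- `Box(S)` of a simplex with vertex list `v`: lattice points
`Σ rᵢ (vᵢ, 1)` with `0 ≤ rᵢ < 1`. -/
def boxSimplex {N d : ℕ} (v : Fin (d+1) → Pt N) : Set (Pt N × ℝ) :=
  {p | ∃ r : Fin (d+1) → ℝ, (∀ i, 0 ≤ r i ∧ r i < 1) ∧
      p.1 = ∑ i, r i • v i ∧ p.2 = ∑ i, r i ∧ IsLat p.1 ∧ ∃ z : ℤ, p.2 = (z : ℝ)}

/-- `Box(P)`: holes of `P`, i.e. box points of empty `d`-simplices in `P` that are not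
nonnegative integer combinations of `P̃ ∩ ℤ^{N+1}`. -/
def boxP {N : ℕ} (P : Set (Pt N)) (d : ℕ) : Set (Pt N × ℝ) :=
  (⋃ v ∈ {v : Fin (d+1) → Pt N | EmptySimplexIn P d v}, boxSimplex v) \ genMonoid P

/-- Ehrhart counting function `|nP ∩ ℤ^N|`. -/
noncomputable def ehr {N : ℕ} (P : Set (Pt N)) (n : ℕ) : ℕ := (latPts (dil n P)).ncard

/-- The `δ`-vector of a `d`-dimensional polytope, via finite differences of the
Ehrhart counting function. -/
noncomputable def deltaVec {N : ℕ} (P : Set (Pt N)) (d i : ℕ) : ℤ :=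
  ∑ j ∈ Finset.range (i+1), (-1)^j * ((d+1).choose j) * (ehr P (i - j) : ℤ)

/-- Vertex set of the simplex `P(d,j)`: `0`, `e₁, …, e_{d-1}`, and
`e₁ + ⋯ + e_j + j·e_d`. -/
def Vdj (d j : ℕ) : Set (Pt d) :=
  {0} ∪ {x : Pt d | ∃ k : Fin d, (k : ℕ) < d - 1 ∧ x = fun l => if l = k then (1:ℝ) else 0}
    ∪ {(fun k => (if (k : ℕ) + 1 ≤ j then (1:ℝ) else 0) + (if (k : ℕ) = d - 1 then (j:ℝ) else 0) : Pt d)}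

/-- The simplex `P(d,j) ⊂ ℝ^d`. -/
def Pdj (d j : ℕ) : Set (Pt d) := convexHull ℝ (Vdj d j)

/-!
The half-open parallelepiped spanned by the lifted vertices `(vᵢ, 1)` of a lattice simplex tiles its
cone: splitting weights into floors and fractional parts writes every lattice point of the cone
uniquely as a box point plus a nonnegative integer combination of the `(vᵢ, 1)`. On generating
functions this says that `δᵢ` is the number of box points of height `i`.

For `P(d,j)`, the coordinates and the height of a box point being integers force its weights to be
`a` on the last vertex, with `j a ∈ ℤ`, the fractional part of `-a` on `0, e₁, …, e_j`, and `0` on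
the remaining vertices. So there is one box point for each `a = s / j` with `0 ≤ s < j`; its height
is `0` for `s = 0` and `(j + 1)(1 - s / j) + s / j = j + 1 - s` otherwise, which runs through
`2, …, j`. Emptiness follows because `δ₁ = 0` leaves only `d + 1` lattice points in the simplex.
-/

section FiniteSums
open Finset

lemma forall_fin_add_two {m : ℕ} {p : Fin (m + 2) → Prop} :
    (∀ i, p i) ↔ p 0 ∧ (∀ k : Fin m, p k.castSucc.succ) ∧ p (Fin.last (m + 1)) := by
  rw [Fin.forall_fin_succ, Fin.forall_fin_succ', Fin.succ_last]

lemma sum_fin_add_two {m : ℕ} {M : Type*} [AddCommMonoid M] (f : Fin (m + 2) → M) :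
    ∑ i, f i = f 0 + ∑ k : Fin m, f k.castSucc.succ + f (Fin.last (m + 1)) := by
  rw [Fin.sum_univ_succ, Fin.sum_univ_castSucc, ← add_assoc, Fin.succ_last]

lemma sum_ite_val_lt {M : Type*} [AddCommMonoid M] {m j : ℕ} (hjm : j ≤ m) (c : M) :
    ∑ k : Fin m, (if (k : ℕ) < j then c else 0) = j • c := by
  simp [sum_ite, Fin.card_filter_val_lt, hjm]

lemma card_piAntidiag_univ_fin (d k : ℕ) :
    #(piAntidiag (univ : Finset (Fin (d + 1))) k) = (d + k).choose d := by
  rw [← map_sym_eq_piAntidiag, card_map, sym_univ, card_univ, Sym.card_sym_eq_choose,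
    Fintype.card_fin, Nat.add_right_comm, Nat.add_sub_cancel, Nat.choose_symm_add]

end FiniteSums

section Fract

variable {R : Type*} [CommRing R] [LinearOrder R] [FloorRing R]

lemma eq_fract_neg_of_add_eq_intCast [IsStrictOrderedRing R] {r a : R}
    (hr : r ∈ Set.Ico (0 : R) 1) {z : ℤ} (hz : r + a = z) : r = Int.fract (-a) :=
  (Int.fract_eq_iff.2 ⟨hr.1, hr.2, -z, by rw [Int.cast_neg, ← hz]; ring⟩).symm

lemma exists_natCast_mul_fract_neg_eq_intCast {n : ℕ} {a : R} {z : ℤ} (hz : n * a = z) :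
    ∃ w : ℤ, n * Int.fract (-a) = w :=
  ⟨-z - n * ⌊-a⌋, by rw [Int.fract]; push_cast; rw [← hz]; ring⟩

end Fract

section Lift
open Finset

variable {N : ℕ} {ι : Type*} [Fintype ι]

/-- The linear map `r ↦ ∑ rᵢ (vᵢ, 1)` into `ℝ^(N+1)`, with `ℝ^(N+1)` encoded as `Pt N × ℝ` like
in `boxSimplex`; the last coordinate of a point is its height. -/
noncomputable def liftComb (v : ι → Pt N) : (ι → ℝ) →ₗ[ℝ] Pt N × ℝ :=
  Fintype.linearCombination ℝ fun i => (v i, (1 : ℝ))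

lemma liftComb_apply (v : ι → Pt N) (r : ι → ℝ) :
    liftComb v r = (∑ i, r i • v i, ∑ i, r i) := by
  simp [liftComb, Fintype.linearCombination_apply, Prod.ext_iff, Prod.fst_sum, Prod.snd_sum]

lemma affineIndependent_iff_injective_liftComb {v : ι → Pt N} :
    AffineIndependent ℝ v ↔ Function.Injective (liftComb v) := by
  rw [injective_iff_map_eq_zero, affineIndependent_iff_of_fintype]
  refine forall_congr' fun r => ?_
  rw [liftComb_apply, Prod.mk_eq_zero, and_comm, and_imp]
  refine forall_congr' fun hr => ?_
  rw [univ.weightedVSub_eq_linear_combination hr, funext_iff (f := r)]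
  rfl

lemma mem_convexHull_range_iff_liftComb {v : ι → Pt N} {x : Pt N} :
    x ∈ convexHull ℝ (Set.range v) ↔ ∃ r : ι → ℝ, (∀ i, 0 ≤ r i) ∧ liftComb v r = (x, 1) := by
  classical
  have himage : convexHull ℝ (Set.range v) =
      Fintype.linearCombination ℝ v '' stdSimplex ℝ ι := by
    rw [← convexHull_rangle_single_eq_stdSimplex, LinearMap.image_convexHull, ← Set.range_comp]
    congr 2
    ext1 i
    simp [Fintype.linearCombination_apply_single]
  simp only [himage, Set.mem_image, stdSimplex, Set.mem_ofPred_eq, liftComb_apply, Prod.mk.injEq,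
    Fintype.linearCombination_apply, and_assoc]
  exact exists_congr fun r => and_congr_right fun _ => and_comm

lemma mem_dil_convexHull_range_iff [Nonempty ι] {v : ι → Pt N} {n : ℕ} {x : Pt N} :
    x ∈ dil n (convexHull ℝ (Set.range v)) ↔
      ∃ r : ι → ℝ, (∀ i, 0 ≤ r i) ∧ liftComb v r = (x, (n : ℝ)) := by
  constructor
  · rintro ⟨y, hy, rfl⟩
    obtain ⟨r, hr, hry⟩ := mem_convexHull_range_iff_liftComb.1 hy
    exact ⟨(n : ℝ) • r, fun i => mul_nonneg n.cast_nonneg (hr i), by simp [hry]⟩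
  · rintro ⟨r, hr, hrx⟩
    rcases n.eq_zero_or_pos with rfl | hn
    · have hsum : ∑ i, r i = 0 := by simpa [liftComb_apply] using congrArg Prod.snd hrx
      have hr0 : r = 0 := (Fintype.sum_eq_zero_iff_of_nonneg hr).1 hsum
      obtain rfl : x = 0 := by simpa [hr0] using (congrArg Prod.fst hrx).symm
      obtain ⟨y, hy⟩ := (Set.range_nonempty v).convexHull (𝕜 := ℝ)
      exact ⟨y, hy, by simp⟩
    · have hn0 : (n : ℝ) ≠ 0 := by positivity
      refine ⟨(n : ℝ)⁻¹ • x, mem_convexHull_range_iff_liftComb.2 ⟨(n : ℝ)⁻¹ • r, fun i => ?_, ?_⟩,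
        smul_inv_smul₀ hn0 x⟩
      · exact mul_nonneg (by positivity) (hr i)
      · simp [hrx, hn0]

/-- The lattice `ℤ^(N+1)` inside `Pt N × ℝ`. -/
def liftLattice (N : ℕ) : AddSubgroup (Pt N × ℝ) :=
  (AddSubgroup.pi Set.univ fun _ => (Int.castAddHom ℝ).range).prod (Int.castAddHom ℝ).range

lemma mem_liftLattice {p : Pt N × ℝ} :
    p ∈ liftLattice N ↔ IsLat p.1 ∧ ∃ z : ℤ, p.2 = z := by
  simp [liftLattice, AddSubgroup.mem_prod, AddSubgroup.mem_pi, AddSubgroup.mem_zmultiples_iff,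
    IsLat, eq_comm]

lemma liftComb_natCast_mem_liftLattice {v : ι → Pt N} (hv : ∀ i, IsLat (v i)) (m : ι → ℕ) :
    liftComb v (fun i => (m i : ℝ)) ∈ liftLattice N := by
  have hvertex (i : ι) : (v i, (1 : ℝ)) ∈ liftLattice N :=
    mem_liftLattice.2 ⟨hv i, 1, by simp⟩
  simp only [liftComb, Fintype.linearCombination_apply, Nat.cast_smul_eq_nsmul]
  exact sum_mem fun i _ => nsmul_mem (hvertex i) (m i)

/-- The lattice points of the cone over the convex hull of the points `v i`, a point of the cone
being written as a combination of the lifted points `(v i, 1)`. -/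
def liftConeLat (v : ι → Pt N) : Set (Pt N × ℝ) :=
  {p | p ∈ liftLattice N ∧ ∃ r, (∀ i, 0 ≤ r i) ∧ liftComb v r = p}

lemma bijOn_fst_liftConeLat_latPts_dil [Nonempty ι] (v : ι → Pt N) (n : ℕ) :
    Set.BijOn Prod.fst {p ∈ liftConeLat v | p.2 = n}
      (latPts (dil n (convexHull ℝ (Set.range v)))) := by
  refine ⟨?_, fun p hp q hq h => Prod.ext h (hp.2.trans hq.2.symm), ?_⟩
  · rintro ⟨x, t⟩ ⟨⟨hlat, hx⟩, rfl⟩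
    exact ⟨mem_dil_convexHull_range_iff.2 hx, (mem_liftLattice.1 hlat).1⟩
  · rintro x ⟨hx, hlat⟩
    exact ⟨(x, n), ⟨⟨mem_liftLattice.2 ⟨hlat, n, by simp⟩, mem_dil_convexHull_range_iff.1 hx⟩, rfl⟩,
      rfl⟩

end Lift

lemma finite_latPts_of_isBounded {N : ℕ} {P : Set (Pt N)} (hP : Bornology.IsBounded P) :
    (latPts P).Finite := by
  refine (ZSpan.setFinite_inter (Pi.basisFun ℝ (Fin N)) hP).subset fun x hx => ⟨hx.1, ?_⟩
  rw [SetLike.mem_coe, Module.Basis.mem_span_iff_repr_mem]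
  exact fun i => (hx.2 i).imp fun z hz => by simp [hz]

section Simplex
open Finset

variable {N d : ℕ} {v : Fin (d + 1) → Pt N}

/-- The points of height `h` in `Box` of the simplex with vertex list `v`. -/
def boxSlice (v : Fin (d + 1) → Pt N) (h : ℕ) : Set (Pt N × ℝ) := {p ∈ boxSimplex v | p.2 = h}

lemma mem_boxSimplex_iff {p : Pt N × ℝ} :
    p ∈ boxSimplex v ↔
      p ∈ liftLattice N ∧ ∃ r, (∀ i, r i ∈ Set.Ico (0 : ℝ) 1) ∧ liftComb v r = p := by
  simp only [boxSimplex, Set.mem_ofPred_eq, mem_liftLattice, liftComb_apply, Prod.ext_iff,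
    Set.mem_Ico]
  grind

lemma exists_mem_boxSlice {p : Pt N × ℝ} (hp : p ∈ boxSimplex v) : ∃ h, p ∈ boxSlice v h := by
  obtain ⟨hlat, r, hr, hrp⟩ := mem_boxSimplex_iff.1 hp
  obtain ⟨z, hz⟩ := (mem_liftLattice.1 hlat).2
  have hheight : p.2 = ∑ i, r i := by rw [← hrp, liftComb_apply]
  have hz0 : 0 ≤ z := by
    rw [← Int.cast_nonneg_iff (R := ℝ), ← hz, hheight]
    exact sum_nonneg fun i _ => (hr i).1
  lift z to ℕ using hz0
  exact ⟨z, hp, by simpa using hz⟩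

/-- The translate of a box point by a nonnegative integer combination of the lifted vertices. -/
noncomputable def boxTranslate (v : Fin (d + 1) → Pt N)
    (q : (Pt N × ℝ) × (Fin (d + 1) → ℕ)) : Pt N × ℝ :=
  q.1 + liftComb v (fun i => (q.2 i : ℝ))

lemma mapsTo_boxTranslate (hv : ∀ i, IsLat (v i)) :
    Set.MapsTo (boxTranslate v) (boxSimplex v ×ˢ Set.univ) (liftConeLat v) := by
  rintro ⟨p, m⟩ ⟨hp, -⟩
  obtain ⟨hlat, r, hr, rfl⟩ := mem_boxSimplex_iff.1 hp
  exact ⟨add_mem hlat (liftComb_natCast_mem_liftLattice hv m), r + fun i => (m i : ℝ),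
    fun i => add_nonneg (hr i).1 (m i).cast_nonneg, map_add _ _ _⟩

lemma injOn_boxTranslate (hind : AffineIndependent ℝ v) :
    Set.InjOn (boxTranslate v) (boxSimplex v ×ˢ Set.univ) := by
  rintro ⟨p, m⟩ ⟨hp, -⟩ ⟨p', m'⟩ ⟨hp', -⟩ h
  obtain ⟨-, r, hr, rfl⟩ := mem_boxSimplex_iff.1 hp
  obtain ⟨-, r', hr', rfl⟩ := mem_boxSimplex_iff.1 hp'
  have hweights : r + (fun i => (m i : ℝ)) = r' + fun i => (m' i : ℝ) :=
    affineIndependent_iff_injective_liftComb.1 hind (by simpa [boxTranslate] using h)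
  obtain rfl : m = m' := by
    ext i
    simpa [Nat.floor_add_natCast, (hr i).1, (hr' i).1, Nat.floor_eq_zero.2 (hr i).2,
      Nat.floor_eq_zero.2 (hr' i).2] using congrArg Nat.floor (congrFun hweights i)
  rw [add_right_cancel hweights]

lemma surjOn_boxTranslate (hv : ∀ i, IsLat (v i)) :
    Set.SurjOn (boxTranslate v) (boxSimplex v ×ˢ Set.univ) (liftConeLat v) := by
  rintro _ ⟨hlat, r, hr, rfl⟩
  have hsplit : liftComb v (fun i => Int.fract (r i)) + liftComb v (fun i => (⌊r i⌋₊ : ℝ)) =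
      liftComb v r := by
    rw [← map_add]
    congr 1
    ext i
    simp [natCast_floor_eq_intCast_floor (hr i)]
  refine ⟨(_, fun i => ⌊r i⌋₊), ⟨mem_boxSimplex_iff.2 ⟨?_, _, fun i => ?_, rfl⟩, trivial⟩, hsplit⟩
  · rw [eq_sub_of_add_eq hsplit]
    exact sub_mem hlat (liftComb_natCast_mem_liftLattice hv _)
  · exact ⟨Int.fract_nonneg _, Int.fract_lt_one _⟩

lemma bijOn_boxTranslate (hv : ∀ i, IsLat (v i)) (hind : AffineIndependent ℝ v) :
    Set.BijOn (boxTranslate v) (boxSimplex v ×ˢ Set.univ) (liftConeLat v) :=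
  ⟨mapsTo_boxTranslate hv, injOn_boxTranslate hind, surjOn_boxTranslate hv⟩

lemma finite_boxSlice (v : Fin (d + 1) → Pt N) (h : ℕ) : (boxSlice v h).Finite := by
  have hbounded : Bornology.IsBounded (dil h (convexHull ℝ (Set.range v))) :=
    (isBounded_convexHull.2 (Set.finite_range v).isBounded).smul₀ _
  have hcone := (bijOn_fst_liftConeLat_latPts_dil v h).finite_iff_finite.2
    (finite_latPts_of_isBounded hbounded)
  refine hcone.subset fun p hp => ⟨?_, hp.2⟩
  obtain ⟨hlat, r, hr, hrp⟩ := mem_boxSimplex_iff.1 hp.1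
  exact ⟨hlat, r, fun i => (hr i).1, hrp⟩

lemma boxTranslate_preimage_height (v : Fin (d + 1) → Pt N) (n : ℕ) :
    boxSimplex v ×ˢ Set.univ ∩ {q | (boxTranslate v q).2 = n} =
      ⋃ hk ∈ (antidiagonal n : Set (ℕ × ℕ)),
        boxSlice v hk.1 ×ˢ ((piAntidiag univ hk.2 : Finset (Fin (d + 1) → ℕ)) : Set _) := by
  ext ⟨p, m⟩
  simp only [Set.mem_iUnion, Set.mem_prod, Set.mem_inter_iff,
    HasAntidiagonal.mem_antidiagonal, mem_coe, mem_piAntidiag, Set.mem_ofPred_eq, boxTranslate,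
    liftComb_apply, Prod.snd_add]
  constructor
  · rintro ⟨⟨hp, -⟩, hn⟩
    obtain ⟨h, hp⟩ := exists_mem_boxSlice hp
    rw [hp.2] at hn
    exact ⟨(h, ∑ i, m i), by exact_mod_cast hn, hp, rfl, by simp⟩
  · rintro ⟨⟨h, k⟩, rfl, hp, rfl, -⟩
    exact ⟨⟨hp.1, trivial⟩, by rw [hp.2]; push_cast; rfl⟩

theorem ehr_convexHull_range (hv : ∀ i, IsLat (v i)) (hind : AffineIndependent ℝ v) (n : ℕ) :
    ehr (convexHull ℝ (Set.range v)) n =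
      ∑ hk ∈ antidiagonal n, (boxSlice v hk.1).ncard * (d + hk.2).choose d := by
  have hbij := (bijOn_boxTranslate hv hind).subset_right
    (Set.sep_subset (liftConeLat v) fun p => p.2 = n)
  have hpreimage : boxSimplex v ×ˢ Set.univ ∩ boxTranslate v ⁻¹' {p ∈ liftConeLat v | p.2 = n} =
      boxSimplex v ×ˢ Set.univ ∩ {q | (boxTranslate v q).2 = n} :=
    Set.ext fun q => and_congr_right fun hq => and_iff_right (mapsTo_boxTranslate hv hq)
  rw [ehr, ← (bijOn_fst_liftConeLat_latPts_dil v n).ncard_eq, ← hbij.ncard_eq, hpreimage,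
    boxTranslate_preimage_height, Set.Finite.ncard_biUnion (finite_toSet _), finsum_mem_coe_finset]
  · simp only [Set.ncard_prod, Set.ncard_coe_finset, card_piAntidiag_univ_fin]
  · exact fun hk _ => (finite_boxSlice v hk.1).prod (finite_toSet _)
  · rintro ⟨h, k⟩ - ⟨h', k'⟩ - hne
    refine Set.disjoint_left.2 ?_
    rintro ⟨p, m⟩ ⟨hp, hm⟩ ⟨hp', hm'⟩
    have hh : h = h' := by exact_mod_cast hp.2.symm.trans hp'.2
    have hk : k = k' := (mem_piAntidiag.1 hm).1.symm.trans (mem_piAntidiag.1 hm').1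
    exact hne (Prod.ext hh hk)

end Simplex

section Delta
open Finset PowerSeries

lemma coeff_one_sub_X_pow {R : Type*} [CommRing R] (n i : ℕ) :
    coeff i ((1 - X : R⟦X⟧) ^ n) = (-1) ^ i * (n.choose i : R) := by
  have hrescale : (1 - X : R⟦X⟧) ^ n =
      rescale (-1) (((1 + Polynomial.X : Polynomial R) ^ n : Polynomial R) : R⟦X⟧) := by
    have hX : rescale (-1 : R) X = -X := evalNegHom_X
    simp [hX, sub_eq_add_neg]
  rw [hrescale, coeff_rescale, Polynomial.coeff_coe, Polynomial.coeff_one_add_X_pow]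

lemma deltaVec_eq_coeff {N : ℕ} (P : Set (Pt N)) (d i : ℕ) :
    deltaVec P d i = coeff i ((1 - X) ^ (d + 1) * PowerSeries.mk fun n => (ehr P n : ℤ)) := by
  rw [coeff_mul, Nat.sum_antidiagonal_eq_sum_range_succ_mk]
  simp only [coeff_one_sub_X_pow, coeff_mk, deltaVec]

theorem deltaVec_convexHull_range {N d : ℕ} {v : Fin (d + 1) → Pt N} (hv : ∀ i, IsLat (v i))
    (hind : AffineIndependent ℝ v) (i : ℕ) :
    deltaVec (convexHull ℝ (Set.range v)) d i = (boxSlice v i).ncard := by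
  have hseries : (PowerSeries.mk fun n => (ehr (convexHull ℝ (Set.range v)) n : ℤ)) =
      (PowerSeries.mk fun h => ((boxSlice v h).ncard : ℤ)) *
        PowerSeries.mk fun k => ((d + k).choose d : ℤ) := by
    ext n
    simp [coeff_mul, ehr_convexHull_range hv hind]
  rw [deltaVec_eq_coeff, hseries, mul_left_comm, mul_comm (_ ^ _),
    mk_add_choose_mul_one_sub_pow_eq_one, mul_one, coeff_mk]

lemma ehr_zero {N : ℕ} {P : Set (Pt N)} (hP : P.Nonempty) : ehr P 0 = 1 := by
  have hlat : latPts (dil 0 P) = {0} := by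
    ext x
    simp only [latPts, dil, Nat.cast_zero, Set.zero_smul_set hP, Set.mem_ofPred_eq]
    exact ⟨fun hx => hx.1, fun hx => ⟨hx, fun i => ⟨0, by simp [Set.mem_singleton_iff.1 hx]⟩⟩⟩
  rw [ehr, hlat, Set.ncard_singleton]

lemma deltaVec_one {N : ℕ} {P : Set (Pt N)} (hP : P.Nonempty) (d : ℕ) :
    deltaVec P d 1 = (latPts P).ncard - (d + 1) := by
  have hone : ehr P 1 = (latPts P).ncard := by simp [ehr, dil]
  simp only [deltaVec, sum_range_succ, sum_range_zero, Nat.sub_zero, Nat.sub_self, ehr_zero hP,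
    hone, Nat.choose_zero_right, Nat.choose_one_right]
  push_cast
  ring

theorem emptySimplexIn_of_deltaVec_one_eq_zero {N d : ℕ} {v : Fin (d + 1) → Pt N}
    (hv : ∀ i, IsLat (v i)) (hind : AffineIndependent ℝ v)
    (hδ : deltaVec (convexHull ℝ (Set.range v)) d 1 = 0) :
    EmptySimplexIn (convexHull ℝ (Set.range v)) d v := by
  have hsub : Set.range v ⊆ latPts (convexHull ℝ (Set.range v)) := by
    rintro _ ⟨i, rfl⟩
    exact ⟨subset_convexHull ℝ _ ⟨i, rfl⟩, hv i⟩
  have hcard : (latPts (convexHull ℝ (Set.range v))).ncard = (Set.range v).ncard := by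
    rw [deltaVec_one (Set.range_nonempty v).convexHull] at hδ
    rw [Set.ncard_range_of_injective hind.injective, Nat.card_fin]
    omega
  have hfinite : (latPts (convexHull ℝ (Set.range v))).Finite :=
    finite_latPts_of_isBounded (isBounded_convexHull.2 (Set.finite_range v).isBounded)
  have heq := Set.eq_of_subset_of_ncard_le hsub hcard.le hfinite
  exact ⟨fun i => hsub ⟨i, rfl⟩, hind, fun x hx hlat => heq.superset ⟨hx, hlat⟩⟩

end Delta

namespace Pdj
open Finset

variable {m j : ℕ}

/-- The vertex `e₁ + ⋯ + e_j + j e_(m+1)` of `P(m + 1, j)`. Writing the dimension as `m + 1` avoids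
the truncated `d - 1`. -/
def apex (m j : ℕ) : Pt (m + 1) := Fin.snoc (fun k : Fin m => if (k : ℕ) < j then 1 else 0) (j : ℝ)

/-- The vertices of `P(m + 1, j)`, in the order `0, e₁, …, e_m, apex m j`. -/
def vertex (m j : ℕ) : Fin (m + 2) → Pt (m + 1) :=
  Fin.cons 0 (Fin.snoc (fun k : Fin m => Pi.single k.castSucc 1) (apex m j))

lemma vertex_last : vertex m j (Fin.last (m + 1)) = apex m j := by
  rw [← Fin.succ_last, vertex, Fin.cons_succ, Fin.snoc_last]

lemma isLat_vertex (i : Fin (m + 2)) : IsLat (vertex m j i) := by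
  revert i
  refine forall_fin_add_two.2 ⟨fun l => ⟨0, by simp [vertex]⟩, fun k l => ?_, fun l => ?_⟩
  · exact ⟨if l = k.castSucc then 1 else 0, by simp [vertex, Pi.single_apply]⟩
  · rw [vertex_last]
    cases l using Fin.lastCases with
    | last => exact ⟨j, by simp [apex]⟩
    | cast k => exact ⟨if (k : ℕ) < j then 1 else 0, by simp [apex]⟩

lemma apex_eq_ite_add_ite (hjm : j ≤ m) :
    apex m j = fun k : Fin (m + 1) =>
      (if (k : ℕ) + 1 ≤ j then (1 : ℝ) else 0) + if (k : ℕ) = m then (j : ℝ) else 0 := by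
  ext k
  cases k using Fin.lastCases with
  | last => simp [apex, hjm.not_gt]
  | cast k => simp [apex, k.isLt.ne]

lemma range_vertex (hjm : j ≤ m) : Set.range (vertex m j) = Vdj (m + 1) j := by
  have hunit : Set.range (fun k : Fin m => (Pi.single k.castSucc 1 : Pt (m + 1))) =
      {x | ∃ k : Fin (m + 1), (k : ℕ) < m ∧ x = fun l => if l = k then (1 : ℝ) else 0} := by
    ext x
    simp only [Set.mem_range, Set.mem_ofPred_eq, Fin.exists_fin_succ', Fin.val_castSucc,
      Fin.is_lt, true_and, Fin.val_last, lt_irrefl, false_and, or_false, funext_iff,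
      Pi.single_apply, eq_comm]
  rw [vertex, Fin.range_cons, Fin.range_snoc, apex_eq_ite_add_ite hjm, hunit, Vdj]
  grind

section Coordinates

variable (r : Fin (m + 2) → ℝ)

lemma liftComb_vertex_fst_castSucc (k : Fin m) :
    (liftComb (vertex m j) r).1 k.castSucc =
      r k.castSucc.succ + if (k : ℕ) < j then r (Fin.last (m + 1)) else 0 := by
  rw [liftComb_apply, sum_fin_add_two, vertex_last]
  simp [vertex, apex, Pi.single_apply]

lemma liftComb_vertex_fst_last :
    (liftComb (vertex m j) r).1 (Fin.last m) = j * r (Fin.last (m + 1)) := by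
  rw [liftComb_apply, sum_fin_add_two, vertex_last]
  simp [vertex, apex, mul_comm]

lemma liftComb_vertex_snd :
    (liftComb (vertex m j) r).2 = r 0 + ∑ k : Fin m, r k.castSucc.succ + r (Fin.last (m + 1)) := by
  rw [liftComb_apply]
  exact sum_fin_add_two r

end Coordinates

lemma affineIndependent_vertex (hj : 0 < j) : AffineIndependent ℝ (vertex m j) := by
  rw [affineIndependent_iff_injective_liftComb, injective_iff_map_eq_zero]
  intro r hr
  have hlast : r (Fin.last (m + 1)) = 0 := by
    simpa [hr, hj.ne'] using (liftComb_vertex_fst_last (j := j) r).symm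
  have hmid (k : Fin m) : r k.castSucc.succ = 0 := by
    simpa [hr, hlast] using (liftComb_vertex_fst_castSucc (j := j) r k).symm
  have hzero : r 0 = 0 := by simpa [hr, hlast, hmid] using (liftComb_vertex_snd (j := j) r).symm
  exact funext (forall_fin_add_two.2 ⟨hzero, hmid, hlast⟩)

/-- The weights on the vertices of `P(m + 1, j)` of the box point whose last weight is `a`. -/
noncomputable def boxWeights (m j : ℕ) (a : ℝ) : Fin (m + 2) → ℝ :=
  Fin.cons (Int.fract (-a))
    (Fin.snoc (fun k : Fin m => if (k : ℕ) < j then Int.fract (-a) else 0) a)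

lemma boxWeights_zero {a : ℝ} : boxWeights m j a 0 = Int.fract (-a) := rfl

lemma boxWeights_castSucc_succ {a : ℝ} (k : Fin m) :
    boxWeights m j a k.castSucc.succ = if (k : ℕ) < j then Int.fract (-a) else 0 := by
  rw [boxWeights, Fin.cons_succ, Fin.snoc_castSucc]

lemma boxWeights_last {a : ℝ} : boxWeights m j a (Fin.last (m + 1)) = a := by
  rw [← Fin.succ_last, boxWeights, Fin.cons_succ, Fin.snoc_last]

lemma liftComb_boxWeights_snd (hjm : j ≤ m) (a : ℝ) :
    (liftComb (vertex m j) (boxWeights m j a)).2 = (j + 1) * Int.fract (-a) + a := by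
  simp only [liftComb_vertex_snd, boxWeights_zero, boxWeights_castSucc_succ, boxWeights_last,
    sum_ite_val_lt hjm, nsmul_eq_mul]
  ring

lemma eq_boxWeights {r : Fin (m + 2) → ℝ} (hjm : j ≤ m) (hr : ∀ i, r i ∈ Set.Ico (0 : ℝ) 1)
    (hlat : liftComb (vertex m j) r ∈ liftLattice (m + 1)) :
    r = boxWeights m j (r (Fin.last (m + 1))) := by
  obtain ⟨hcoord, z, hz⟩ := mem_liftLattice.1 hlat
  have hmid (k : Fin m) : r k.castSucc.succ =
      if (k : ℕ) < j then Int.fract (-r (Fin.last (m + 1))) else 0 := by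
    obtain ⟨y, hy⟩ := hcoord k.castSucc
    rw [liftComb_vertex_fst_castSucc] at hy
    split_ifs at hy ⊢
    · exact eq_fract_neg_of_add_eq_intCast (hr _) hy
    · simpa using eq_fract_neg_of_add_eq_intCast (hr _) hy
  have hzero : r 0 = Int.fract (-r (Fin.last (m + 1))) := by
    obtain ⟨y, hy⟩ := hcoord (Fin.last m)
    rw [liftComb_vertex_fst_last] at hy
    obtain ⟨w, hw⟩ := exists_natCast_mul_fract_neg_eq_intCast hy
    rw [liftComb_vertex_snd, sum_congr rfl fun k _ => hmid k, sum_ite_val_lt hjm,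
      nsmul_eq_mul, hw] at hz
    exact eq_fract_neg_of_add_eq_intCast (hr 0) (z := z - w) (by push_cast; linarith)
  refine funext (forall_fin_add_two.2 ⟨hzero, fun k => ?_, boxWeights_last.symm⟩)
  rw [hmid, boxWeights_castSucc_succ]

lemma boxWeights_mem_Ico {a : ℝ} (ha : a ∈ Set.Ico (0 : ℝ) 1) (i : Fin (m + 2)) :
    boxWeights m j a i ∈ Set.Ico (0 : ℝ) 1 := by
  have hfract : Int.fract (-a) ∈ Set.Ico (0 : ℝ) 1 := ⟨Int.fract_nonneg _, Int.fract_lt_one _⟩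
  revert i
  refine forall_fin_add_two.2 ⟨hfract, fun k => ?_, by rwa [boxWeights_last]⟩
  rw [boxWeights_castSucc_succ]
  split_ifs
  · exact hfract
  · simp

lemma liftComb_boxWeights_mem_liftLattice (hjm : j ≤ m) {a : ℝ} {z : ℤ} (hz : j * a = z) :
    liftComb (vertex m j) (boxWeights m j a) ∈ liftLattice (m + 1) := by
  have hfract : Int.fract (-a) + a = (-⌊-a⌋ : ℤ) := by
    rw [Int.fract]
    push_cast
    ring
  refine mem_liftLattice.2 ⟨fun l => ?_, ?_⟩
  · cases l using Fin.lastCases with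
    | last => exact ⟨z, by rw [liftComb_vertex_fst_last, boxWeights_last, hz]⟩
    | cast k =>
      rw [liftComb_vertex_fst_castSucc, boxWeights_castSucc_succ, boxWeights_last]
      split_ifs
      · exact ⟨_, hfract⟩
      · exact ⟨0, by simp⟩
  · obtain ⟨w, hw⟩ := exists_natCast_mul_fract_neg_eq_intCast hz
    exact ⟨w + -⌊-a⌋, by rw [liftComb_boxWeights_snd hjm, Int.cast_add, ← hw, ← hfract]; ring⟩

/-- The box point of `P(m + 1, j)` whose last weight is `s / j`. -/
noncomputable def boxPoint (m j s : ℕ) : Pt (m + 1) × ℝ :=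
  liftComb (vertex m j) (boxWeights m j (s / j))

lemma boxSimplex_vertex (hj : 0 < j) (hjm : j ≤ m) :
    boxSimplex (vertex m j) = boxPoint m j '' Set.Iio j := by
  have hj0 : (0 : ℝ) < j := by exact_mod_cast hj
  ext p
  rw [mem_boxSimplex_iff]
  constructor
  · rintro ⟨hlat, r, hr, rfl⟩
    obtain ⟨z, hz⟩ := (mem_liftLattice.1 hlat).1 (Fin.last m)
    rw [liftComb_vertex_fst_last] at hz
    have hz0 : 0 ≤ z := by
      exact_mod_cast hz ▸ mul_nonneg hj0.le (hr (Fin.last _)).1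
    lift z to ℕ using hz0
    have hlast : r (Fin.last (m + 1)) = z / j := by
      rw [eq_div_iff hj0.ne', mul_comm]
      exact_mod_cast hz
    refine ⟨z, ?_, ?_⟩
    · have hlt := (hr (Fin.last (m + 1))).2
      rw [hlast, div_lt_one hj0] at hlt
      exact_mod_cast hlt
    · rw [eq_boxWeights hjm hr hlat, hlast, boxPoint]
  · rintro ⟨s, hs, rfl⟩
    have hs' : (s : ℝ) < j := by exact_mod_cast hs
    exact ⟨liftComb_boxWeights_mem_liftLattice hjm (z := s) (by field_simp; simp), _,
      boxWeights_mem_Ico ⟨by positivity, (div_lt_one hj0).2 hs'⟩, rfl⟩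

lemma boxPoint_snd (hjm : j ≤ m) {s : ℕ} (hs : s < j) :
    (boxPoint m j s).2 = if s = 0 then 0 else j + 1 - (s : ℝ) := by
  have hj0 : (0 : ℝ) < j := by exact_mod_cast s.zero_le.trans_lt hs
  rw [boxPoint, liftComb_boxWeights_snd hjm]
  split_ifs with h0
  · simp [h0]
  · have hs' : (s : ℝ) < j := by exact_mod_cast hs
    have hs0 : (0 : ℝ) < s := by exact_mod_cast Nat.pos_of_ne_zero h0
    have hfract : Int.fract (-(s / j : ℝ)) = 1 - s / j := by
      rw [Int.fract_eq_iff]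
      refine ⟨?_, ?_, -1, by push_cast; ring⟩
      · exact sub_nonneg.2 ((div_lt_one hj0).2 hs').le
      · exact sub_lt_self _ (div_pos hs0 hj0)
    rw [hfract]
    field_simp
    ring

lemma boxSlice_vertex (hj : 0 < j) (hjm : j ≤ m) (i : ℕ) :
    boxSlice (vertex m j) i =
      boxPoint m j '' {s | s < j ∧ if s = 0 then i = 0 else s + i = j + 1} := by
  have hheight {s : ℕ} (hs : s < j) : (boxPoint m j s).2 = i ↔
      if s = 0 then i = 0 else s + i = j + 1 := by
    rw [boxPoint_snd hjm hs]
    split_ifs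
    · exact_mod_cast eq_comm
    · rw [sub_eq_iff_eq_add, eq_comm, add_comm]
      exact_mod_cast Iff.rfl
  ext p
  rw [boxSlice, boxSimplex_vertex hj hjm]
  constructor
  · rintro ⟨⟨s, hs, rfl⟩, hp⟩
    exact ⟨s, ⟨hs, (hheight hs).1 hp⟩, rfl⟩
  · rintro ⟨s, ⟨hs, hsi⟩, rfl⟩
    exact ⟨⟨s, hs, rfl⟩, (hheight hs).2 hsi⟩

lemma ncard_boxSlice_vertex (hj : 0 < j) (hjm : j ≤ m) (i : ℕ) :
    (boxSlice (vertex m j) i).ncard = if i = 0 ∨ i ∈ Icc 2 j then 1 else 0 := by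
  rw [boxSlice_vertex hj hjm]
  have hset : {s | s < j ∧ if s = 0 then i = 0 else s + i = j + 1} =
      if i = 0 then {0} else if i ∈ Icc 2 j then {j + 1 - i} else (∅ : Set ℕ) := by
    ext s
    grind
  rw [hset]
  grind [Set.image_singleton, Set.ncard_singleton, Set.image_empty, Set.ncard_empty]

theorem deltaVec_eq_ite (hj : 0 < j) (hjm : j ≤ m) (i : ℕ) :
    deltaVec (Pdj (m + 1) j) (m + 1) i = if i = 0 ∨ i ∈ Icc 2 j then 1 else 0 := by
  rw [Pdj, ← range_vertex hjm, deltaVec_convexHull_range isLat_vertex (affineIndependent_vertex hj),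
    ncard_boxSlice_vertex hj hjm]
  simp

theorem sum_deltaVec (hj : 0 < j) (hjm : j ≤ m) :
    ∑ i ∈ range (m + 2), deltaVec (Pdj (m + 1) j) (m + 1) i = j := by
  have hsupport : {i ∈ range (m + 2) | i = 0 ∨ i ∈ Icc 2 j} = insert 0 (Icc 2 j) := by
    ext i
    simp only [mem_filter, mem_range, mem_insert, mem_Icc]
    omega
  simp only [deltaVec_eq_ite hj hjm, sum_boole, hsupport]
  rw [card_insert_of_notMem (by simp), Nat.card_Icc]
  congr 1
  omega

theorem mem_Vdj_of_isLat (hj : 0 < j) (hjm : j ≤ m) {x : Pt (m + 1)}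
    (hx : x ∈ Pdj (m + 1) j) (hlat : IsLat x) : x ∈ Vdj (m + 1) j := by
  have hδ : deltaVec (Pdj (m + 1) j) (m + 1) 1 = 0 := by simp [deltaVec_eq_ite hj hjm]
  rw [Pdj, ← range_vertex hjm] at hx hδ
  rw [← range_vertex hjm]
  exact (emptySimplexIn_of_deltaVec_one_eq_zero isLat_vertex (affineIndependent_vertex hj) hδ).2.2
    x hx hlat

end Pdj

/-- the δ-vector of `P(d,j)` is `(1,0,1,…,1,0,…,0)` with ones in
positions `2,…,j`; its entries sum to the normalized volume `j`; `P(d,j)` is an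
empty simplex (`δ₁ = 0`), and `μ_Ehr(P(d,j)) = j`. -/
theorem delta_vector_Pdj (d j : ℕ) (hd : 3 ≤ d) (hj2 : 2 ≤ j) (hjd : j ≤ d - 1) :
    deltaVec (Pdj d j) d 0 = 1 ∧
    deltaVec (Pdj d j) d 1 = 0 ∧
    (∀ i, 2 ≤ i → i ≤ j → deltaVec (Pdj d j) d i = 1) ∧
    (∀ i, j < i → i ≤ d → deltaVec (Pdj d j) d i = 0) ∧
    (∑ i ∈ Finset.range (d + 1), deltaVec (Pdj d j) d i = (j : ℤ)) ∧
    (∀ x ∈ Pdj d j, IsLat x → x ∈ Vdj d j) ∧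
    IsGreatest {i : ℕ | i ≤ d ∧ deltaVec (Pdj d j) d i ≠ 0} j := by
  obtain ⟨m, rfl⟩ : ∃ m, d = m + 1 := ⟨d - 1, by omega⟩
  have hj : 0 < j := by omega
  have hjm : j ≤ m := by omega
  have hδ := Pdj.deltaVec_eq_ite hj hjm
  refine ⟨by simp [hδ], by simp [hδ], fun i hi hij => ?_, fun i hij _ => ?_,
    Pdj.sum_deltaVec hj hjm, fun x => Pdj.mem_Vdj_of_isLat hj hjm, ?_, ?_⟩
  · rw [hδ, if_pos (Or.inr (Finset.mem_Icc.2 ⟨hi, hij⟩))]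
  · rw [hδ, if_neg (by grind)]
  · exact ⟨by omega, by simp [hδ, hj2]⟩
  · rintro i ⟨-, hi⟩
    by_contra hij
    exact hi (by rw [hδ, if_neg (by grind)])
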